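/- Let ϑ₁, ϑ₂, ϑ₃, ϑ₄ be Beurling weights on ℝ^d and 1 ≤ p, q, r < ∞. If the set inclusion A^{p,1,q,r}_{ϑ₁,ϑ₂}(ℝ^d) ⊆ A^{p,1,q,r}_{ϑ₃,ϑ₄}(ℝ^d) holds, then the inclusion is automatically continuous: there exists c > 0 such that ‖f‖_{A_{ϑ₃,ϑ₄}} ≤ c·‖f‖_{A_{ϑ₁,ϑ₂}} for all f ∈ A^{p,1,q,r}_{ϑ₁,ϑ₂}(ℝ^d). -/

import Mathlib

open MeasureTheory Filter Topology
open scoped ENNReal NNReal BigOperators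

noncomputable section

/-- The unit cube `α + [0,1)^d` at the integer point `α ∈ ℤ^d`. -/
def cube {d : ℕ} (α : Fin d → ℤ) : Set (Fin d → ℝ) :=
  Set.univ.pi fun i => Set.Ico (α i : ℝ) ((α i : ℝ) + 1)

/-- The weighted amalgam norm `‖f‖_{pq,ω}` of the space `(L^p_ω, ℓ^q)`. -/
def amalgamNorm {d : ℕ} (p q : ℝ) (ω : (Fin d → ℝ) → ℝ) (f : (Fin d → ℝ) → ℂ) : ℝ≥0∞ :=
  (∑' α : Fin d → ℤ,
      (eLpNorm (fun x => ω x • f x) (ENNReal.ofReal p) (volume.restrict (cube α))) ^ q) ^ (1 / q)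

/-- Membership in the weighted amalgam space `(L^p_ω, ℓ^q)`. -/
def MemAmalgam {d : ℕ} (p q : ℝ) (ω : (Fin d → ℝ) → ℝ) (f : (Fin d → ℝ) → ℂ) : Prop :=
  Measurable f ∧ amalgamNorm p q ω f < ⊤

/-- A Beurling weight: measurable, `ϑ ≥ 1` and submultiplicative. -/
def IsBeurling {d : ℕ} (ϑ : (Fin d → ℝ) → ℝ) : Prop :=
  Measurable ϑ ∧ (∀ x, 1 ≤ ϑ x) ∧ ∀ x y, ϑ (x + y) ≤ ϑ x * ϑ y

/-- The Fourier transform `f̂(ξ) = ∫ f(x) e^{-2πi⟨x,ξ⟩} dx`. -/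
def fourierT {d : ℕ} (f : (Fin d → ℝ) → ℂ) (ξ : Fin d → ℝ) : ℂ :=
  ∫ x : Fin d → ℝ,
    Complex.exp (-(2 * (Real.pi : ℂ) * Complex.I * ∑ i, (x i : ℂ) * (ξ i : ℂ))) * f x

/-- The norm of `A^{p,1,q,r}_{ϑ₁,ϑ₂}(ℝ^d)`. -/
def ANorm {d : ℕ} (p q r : ℝ) (ϑ₁ ϑ₂ : (Fin d → ℝ) → ℝ) (f : (Fin d → ℝ) → ℂ) : ℝ≥0∞ :=
  amalgamNorm p 1 ϑ₁ f + amalgamNorm q r ϑ₂ (fourierT f)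

/-- Membership in `A^{p,1,q,r}_{ϑ₁,ϑ₂}(ℝ^d)`. -/
def MemA {d : ℕ} (p q r : ℝ) (ϑ₁ ϑ₂ : (Fin d → ℝ) → ℝ) (f : (Fin d → ℝ) → ℂ) : Prop :=
  MemAmalgam p 1 ϑ₁ f ∧ MemAmalgam q r ϑ₂ (fourierT f)

/-- Convolution `(f∗g)(x) = ∫ f(x−t)g(t) dt`. -/
def convF {d : ℕ} (f g : (Fin d → ℝ) → ℂ) (x : Fin d → ℝ) : ℂ :=
  ∫ t : Fin d → ℝ, f (x - t) * g t

/-- `ϑ ≺ ϑ'` : domination of weights up to a constant. -/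
def Prec {d : ℕ} (ϑ ϑ' : (Fin d → ℝ) → ℝ) : Prop :=
  ∃ C : ℝ, 0 < C ∧ ∀ x, ϑ x ≤ C * ϑ' x

/-- The Beurling–Domar condition `∑_{n≥1} log ϑ(nx)/n² < ∞`. -/
def BeurlingDomar {d : ℕ} (ϑ : (Fin d → ℝ) → ℝ) : Prop :=
  ∀ x : Fin d → ℝ, Summable fun n : ℕ => Real.log (ϑ ((n : ℝ) • x)) / (n : ℝ) ^ 2

/-- `w` does not tend to zero as `|x| → ∞`. -/
def NotVanishingAtInfty {d : ℕ} (w : (Fin d → ℝ) → ℝ) : Prop :=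
  ∃ δ : ℝ, 0 < δ ∧ ∀ R : ℝ, 0 < R → ∃ x : Fin d → ℝ, R < ‖x‖ ∧ δ ≤ w x

end

/-!
Extend the two norms by `∞` to all of `L¹`. By Fatou's lemma and the continuity of the Fourier
transform from `L¹` to bounded functions, they are lower semicontinuous, and the first dominates the
`L¹` norm because its weight is at least `1` and the unit cubes have measure `1`.
An extended seminorm with these two properties makes the subspace where it is finite complete.
Hence `A^{p,1,q,r}_{ϑ₁,ϑ₂}` is barrelled by Baire's theorem, and the second norm, being finite and
lower semicontinuous on it, is continuous.
-/

section ExtendedSeminorms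

/-- A `[0, ∞]`-valued seminorm on a vector space. Homogeneity with the convention `0 * ∞ = 0`
includes `N 0 = 0`. -/
structure ExtendedSeminorm (𝕜 E : Type*) [NormedField 𝕜] [AddCommGroup E] [Module 𝕜 E] where
  toFun : E → ℝ≥0∞
  map_add_le' : ∀ x y, toFun (x + y) ≤ toFun x + toFun y
  map_smul' : ∀ (c : 𝕜) x, toFun (c • x) = ‖c‖ₑ * toFun x

namespace ExtendedSeminorm

section Algebra

variable {𝕜 E F : Type*} [NormedField 𝕜] [AddCommGroup E] [Module 𝕜 E] [AddCommGroup F]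
  [Module 𝕜 F]

instance : CoeFun (ExtendedSeminorm 𝕜 E) fun _ => E → ℝ≥0∞ := ⟨toFun⟩

lemma map_add_le (N : ExtendedSeminorm 𝕜 E) (x y : E) : N (x + y) ≤ N x + N y :=
  N.map_add_le' x y

lemma map_smul (N : ExtendedSeminorm 𝕜 E) (c : 𝕜) (x : E) : N (c • x) = ‖c‖ₑ * N x :=
  N.map_smul' c x

lemma map_zero (N : ExtendedSeminorm 𝕜 E) : N 0 = 0 := by
  simpa using N.map_smul 0 0

/-- The seminorm given by an extended seminorm with finite values. -/
def toSeminorm (N : ExtendedSeminorm 𝕜 E) (hN : ∀ x, N x < ∞) : Seminorm 𝕜 E :=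
  Seminorm.of (fun x => (N x).toReal)
    (fun x y => by
      rw [← ENNReal.toReal_add (hN x).ne (hN y).ne]
      exact ENNReal.toReal_mono (ENNReal.add_lt_top.2 ⟨hN x, hN y⟩).ne (N.map_add_le x y))
    (fun c x => by rw [N.map_smul, ENNReal.toReal_mul, toReal_enorm])

lemma lowerSemicontinuous_toSeminorm [TopologicalSpace E] {N : ExtendedSeminorm 𝕜 E}
    (hN : ∀ x, N x < ∞) (hlsc : LowerSemicontinuous N) :
    LowerSemicontinuous (N.toSeminorm hN) := by
  intro x a hax
  obtain ha | ha := lt_or_ge a 0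
  · exact Eventually.of_forall fun y => ha.trans_le (apply_nonneg _ y)
  · have hlt (y : E) : ENNReal.ofReal a < N y ↔ a < N.toSeminorm hN y :=
      ENNReal.ofReal_lt_iff_lt_toReal ha (hN y).ne
    exact (hlsc x _ ((hlt x).2 hax)).mono fun y => (hlt y).1

/-- The pullback of an extended seminorm along a linear map. -/
def comp (N : ExtendedSeminorm 𝕜 F) (L : E →ₗ[𝕜] F) : ExtendedSeminorm 𝕜 E where
  toFun x := N (L x)
  map_add_le' x y := by simpa only [L.map_add] using N.map_add_le (L x) (L y)
  map_smul' c x := by simpa only [L.map_smul] using N.map_smul c (L x)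

/-- The subspace on which an extended seminorm is finite. -/
def finiteSubmodule (N : ExtendedSeminorm 𝕜 E) : Submodule 𝕜 E where
  carrier := {x | N x < ∞}
  add_mem' hx hy := (N.map_add_le _ _).trans_lt (ENNReal.add_lt_top.2 ⟨hx, hy⟩)
  zero_mem' := by simp [N.map_zero]
  smul_mem' c x hx := by
    simpa only [Set.mem_ofPred_eq, N.map_smul] using ENNReal.mul_lt_top enorm_lt_top hx

/-- The subspace on which an extended seminorm `N` is finite, normed by `N`. It is a type synonym,
so that a topology of the ambient space does not interfere with the one given by `N`. -/
def FiniteSpace (N : ExtendedSeminorm 𝕜 E) : Type _ := N.finiteSubmodule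

namespace FiniteSpace

variable (N : ExtendedSeminorm 𝕜 E)

instance : AddCommGroup N.FiniteSpace := inferInstanceAs (AddCommGroup N.finiteSubmodule)

instance : Module 𝕜 N.FiniteSpace := inferInstanceAs (Module 𝕜 N.finiteSubmodule)

/-- The inclusion of the subspace of finiteness into the ambient space. -/
def incl : N.FiniteSpace →ₗ[𝕜] E := N.finiteSubmodule.subtype

lemma lt_top (x : N.FiniteSpace) : N (incl N x) < ∞ := x.2

lemma exists_incl_eq {N : ExtendedSeminorm 𝕜 E} {x : E} (hx : N x < ∞) : ∃ y, incl N y = x :=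
  ⟨⟨x, hx⟩, rfl⟩

noncomputable instance : SeminormedAddCommGroup N.FiniteSpace :=
  ((N.comp (incl N)).toSeminorm (lt_top N)).toAddGroupSeminorm.toSeminormedAddCommGroup

lemma norm_eq (x : N.FiniteSpace) : ‖x‖ = (N (incl N x)).toReal := rfl

lemma enorm_eq (x : N.FiniteSpace) : ‖x‖ₑ = N (incl N x) := by
  rw [← ofReal_norm, norm_eq, ENNReal.ofReal_toReal (lt_top N x).ne]

noncomputable instance : NormedSpace 𝕜 N.FiniteSpace where
  norm_smul_le c x := (map_smul_eq_mul ((N.comp (incl N)).toSeminorm (lt_top N)) c x).le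

end FiniteSpace

end Algebra

section Complete

variable {𝕜 X : Type*} [SeminormedAddCommGroup X]

lemma FiniteSpace.lipschitzWith_incl [NormedField 𝕜] [NormedSpace 𝕜 X]
    (N : ExtendedSeminorm 𝕜 X) (hle : ∀ x, ‖x‖ₑ ≤ N x) : LipschitzWith 1 (incl N) := by
  intro x y
  rw [ENNReal.coe_one, one_mul, edist_eq_enorm_sub, edist_eq_enorm_sub, enorm_eq, map_sub]
  exact hle _

lemma FiniteSpace.completeSpace [NormedField 𝕜] [NormedSpace 𝕜 X] [CompleteSpace X]
    {N : ExtendedSeminorm 𝕜 X} (hlsc : LowerSemicontinuous N) (hle : ∀ x, ‖x‖ₑ ≤ N x) :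
    CompleteSpace N.FiniteSpace := by
  refine EMetric.complete_of_cauchySeq_tendsto fun u hu => ?_
  obtain ⟨a, ha⟩ := cauchySeq_tendsto_of_complete
    ((lipschitzWith_incl N hle).uniformContinuous.comp_cauchySeq hu)
  have hdist : ∀ ε > 0, ∃ n₀, ∀ n ≥ n₀, N (incl N (u n) - a) ≤ ε := by
    intro ε hε
    obtain ⟨n₀, hn₀⟩ := EMetric.cauchySeq_iff.1 hu ε hε
    refine ⟨n₀, fun n hn => (hlsc.isClosed_preimage ε).mem_of_tendsto (ha.const_sub _) ?_⟩
    filter_upwards [eventually_ge_atTop n₀] with m hm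
    have := (hn₀ n hn m hm).le
    rwa [edist_eq_enorm_sub, enorm_eq, map_sub] at this
  obtain ⟨b, rfl⟩ : ∃ b, incl N b = a := by
    obtain ⟨n, hn⟩ := hdist 1 one_pos
    obtain ⟨b, hb⟩ := exists_incl_eq ((hn n le_rfl).trans_lt ENNReal.one_lt_top)
    exact ⟨u n - b, by rw [map_sub, hb, sub_sub_cancel]⟩
  refine ⟨b, EMetric.tendsto_atTop.2 fun ε hε => ?_⟩
  obtain ⟨δ, hδ, hδε⟩ := exists_between hε
  obtain ⟨n₀, hn₀⟩ := hdist δ hδ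
  refine ⟨n₀, fun n hn => ?_⟩
  rw [edist_eq_enorm_sub, enorm_eq, map_sub]
  exact (hn₀ n hn).trans_lt hδε

theorem exists_le_mul_of_lt_top_imp_lt_top [NontriviallyNormedField 𝕜] [NormedSpace 𝕜 X]
    [CompleteSpace X] {N₁ N₂ : ExtendedSeminorm 𝕜 X} (hlsc₁ : LowerSemicontinuous N₁)
    (hlsc₂ : LowerSemicontinuous N₂) (hle : ∀ x, ‖x‖ₑ ≤ N₁ x)
    (hfin : ∀ x, N₁ x < ∞ → N₂ x < ∞) :
    ∃ c : ℝ, 0 < c ∧ ∀ x, N₂ x ≤ ENNReal.ofReal c * N₁ x := by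
  have := FiniteSpace.completeSpace hlsc₁ hle
  let ι := FiniteSpace.incl N₁
  have hfin₂ : ∀ x, N₂.comp ι x < ∞ := fun x => hfin _ (FiniteSpace.lt_top N₁ x)
  have hlsc : LowerSemicontinuous (N₂.comp ι) :=
    hlsc₂.comp (FiniteSpace.lipschitzWith_incl N₁ hle).continuous
  have hcont : Continuous ((N₂.comp ι).toSeminorm hfin₂) :=
    Seminorm.continuous_of_lowerSemicontinuous _ (lowerSemicontinuous_toSeminorm hfin₂ hlsc)
  obtain ⟨c, hc, hbound⟩ := Seminorm.bound_of_continuous_normedSpace _ hcont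
  refine ⟨c, hc, fun x => ?_⟩
  obtain hx | hx := eq_or_ne (N₁ x) ∞
  · rw [hx, ENNReal.mul_top (ENNReal.ofReal_pos.2 hc).ne']
    exact le_top
  · obtain ⟨y, rfl⟩ := FiniteSpace.exists_incl_eq hx.lt_top
    have hy : (N₂ (ι y)).toReal ≤ c * (N₁ (ι y)).toReal := hbound y
    rwa [← ENNReal.ofReal_toReal (hfin _ hx.lt_top).ne, ← ENNReal.ofReal_toReal hx,
      ← ENNReal.ofReal_mul hc.le, ENNReal.ofReal_le_ofReal_iff (by positivity)]

end Complete

end ExtendedSeminorm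

end ExtendedSeminorms

section ConvergenceInMeasure

variable {α ι E : Type*} {m : MeasurableSpace α} {μ : Measure α}

lemma tendstoInMeasure_of_tendstoUniformly [PseudoEMetricSpace E] {l : Filter ι} {f : ι → α → E}
    {g : α → E} (h : TendstoUniformly f g l) : TendstoInMeasure μ f l g := by
  intro ε hε
  refine tendsto_const_nhds.congr' ?_
  filter_upwards [EMetric.tendstoUniformly_iff.1 h ε hε] with i hi
  have hempty : {x | ε ≤ edist (f i x) (g x)} = ∅ :=
    Set.eq_empty_of_forall_notMem fun x hx => (hi x).not_ge (by rwa [edist_comm])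
  rw [hempty, measure_empty]

lemma lowerSemicontinuous_eLpNorm_smul {X 𝕜 : Type*} [TopologicalSpace X]
    [FirstCountableTopology X] [NormedField 𝕜] [NormedAddCommGroup E] [NormedSpace 𝕜 E]
    {ν : Measure α} (hνμ : ν ≪ μ) {ω : α → 𝕜} (hω : AEStronglyMeasurable ω μ) {Φ : X → α → E}
    (hΦ : ∀ x, AEStronglyMeasurable (Φ x) μ)
    (hcont : ∀ x, TendstoInMeasure μ Φ (𝓝 x) (Φ x)) (p : ℝ≥0∞) :
    LowerSemicontinuous fun x => eLpNorm (fun y => ω y • Φ x y) p ν := by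
  intro x c hc
  by_contra hfreq
  let l := 𝓝 x ⊓ 𝓟 {z | ¬c < eLpNorm (fun y => ω y • Φ z y) p ν}
  have : l.NeBot := frequently_iff_neBot.1 (not_eventually.1 hfreq)
  obtain ⟨z, hz, hlim⟩ := ((hcont x).mono (v := l) inf_le_left).exists_seq_tendsto_ae'
  have hfatou := Lp.eLpNorm_lim_le_liminf_eLpNorm (p := p) (μ := ν)
    (f := fun n y => ω y • Φ (z n) y) (fun n => (hω.smul (hΦ (z n))).mono_ac hνμ)
    (fun y => ω y • Φ x y) (hνμ.ae_le (hlim.mono fun y hy => hy.const_smul (ω y)))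
  refine hc.not_ge (hfatou.trans (liminf_le_of_frequently_le' (Eventually.frequently ?_)))
  filter_upwards [(tendsto_inf.1 hz).2.eventually (mem_principal_self _)] with n hn
  exact not_lt.1 hn

end ConvergenceInMeasure

section Cube

variable {d : ℕ}

lemma iUnion_cube : ⋃ α : Fin d → ℤ, cube α = Set.univ :=
  Set.eq_univ_of_forall fun x => Set.mem_iUnion.2
    ⟨fun i => ⌊x i⌋, fun _ _ => ⟨Int.floor_le _, Int.lt_floor_add_one _⟩⟩

instance isProbabilityMeasure_restrict_cube (α : Fin d → ℤ) :
    IsProbabilityMeasure ((volume : Measure (Fin d → ℝ)).restrict (cube α)) where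
  measure_univ := by
    rw [Measure.restrict_apply_univ, cube, Real.volume_pi_Ico]
    simp

end Cube

section Amalgam

variable {d : ℕ} {p q : ℝ} {ω : (Fin d → ℝ) → ℝ} {f g : (Fin d → ℝ) → ℂ}

lemma amalgamNorm_congr_ae (h : f =ᵐ[volume] g) : amalgamNorm p q ω f = amalgamNorm p q ω g := by
  have hlocal (α : Fin d → ℤ) : eLpNorm (fun x => ω x • f x) (.ofReal p) (volume.restrict (cube α))
      = eLpNorm (fun x => ω x • g x) (.ofReal p) (volume.restrict (cube α)) :=
    eLpNorm_congr_ae (ae_restrict_of_ae (h.mono fun x hx => by simp only [hx]))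
  simp only [amalgamNorm, hlocal]

lemma amalgamNorm_add_le (hp : 1 ≤ p) (hq : 1 ≤ q) (hω : AEStronglyMeasurable ω)
    (hf : AEStronglyMeasurable f) (hg : AEStronglyMeasurable g) :
    amalgamNorm p q ω (f + g) ≤ amalgamNorm p q ω f + amalgamNorm p q ω g := by
  let localNorm (h : (Fin d → ℝ) → ℂ) (α : Fin d → ℤ) : ℝ≥0∞ :=
    eLpNorm (fun x => ω x • h x) (.ofReal p) (volume.restrict (cube α))
  have hlocal (α : Fin d → ℤ) : localNorm (f + g) α ≤ localNorm f α + localNorm g α := by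
    simp only [localNorm, Pi.add_apply, smul_add]
    exact eLpNorm_add_le (hω.smul hf).restrict (hω.smul hg).restrict (by simpa using hp)
  calc amalgamNorm p q ω (f + g)
      ≤ (∑' α, (localNorm f α + localNorm g α) ^ q) ^ (1 / q) := by
        unfold amalgamNorm
        gcongr with α
        exact hlocal α
    _ ≤ amalgamNorm p q ω f + amalgamNorm p q ω g := by
        have hminkowski := ENNReal.lintegral_Lp_add_le (μ := .count) (f := localNorm f)
          (g := localNorm g) .of_discrete .of_discrete hq
        simpa only [lintegral_count] using! hminkowski

lemma amalgamNorm_const_smul (hq : 0 < q) (c : ℂ) :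
    amalgamNorm p q ω (c • f) = ‖c‖ₑ * amalgamNorm p q ω f := by
  have hlocal (α : Fin d → ℤ) :
      eLpNorm (fun x => ω x • (c • f) x) (.ofReal p) (volume.restrict (cube α))
        = ‖c‖ₑ * eLpNorm (fun x => ω x • f x) (.ofReal p) (volume.restrict (cube α)) := by
    rw [← eLpNorm_const_smul]
    simp only [Pi.smul_def, smul_comm c]
  simp only [amalgamNorm, hlocal, ENNReal.mul_rpow_of_nonneg _ _ hq.le, ENNReal.tsum_mul_left]
  rw [ENNReal.mul_rpow_of_nonneg _ _ (by positivity), one_div, ENNReal.rpow_rpow_inv hq.ne']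

lemma eLpNorm_one_le_amalgamNorm (hp : 1 ≤ p) (hω : ∀ x, 1 ≤ ω x) (hf : AEStronglyMeasurable f) :
    eLpNorm f 1 ≤ amalgamNorm p 1 ω f := by
  have hlocal (α : Fin d → ℤ) : eLpNorm f 1 (volume.restrict (cube α))
      ≤ eLpNorm (fun x => ω x • f x) (.ofReal p) (volume.restrict (cube α)) := by
    refine (eLpNorm_le_eLpNorm_of_exponent_le (by simpa using hp) hf.restrict).trans
      (eLpNorm_mono fun x => ?_)
    rw [norm_smul]
    exact le_mul_of_one_le_left (norm_nonneg _) ((hω x).trans (Real.le_norm_self _))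
  have hamalgam : amalgamNorm p 1 ω f
      = ∑' α, eLpNorm (fun x => ω x • f x) (.ofReal p) (volume.restrict (cube α)) := by
    simp only [amalgamNorm, ENNReal.rpow_one, one_div, inv_one]
  have hcover : eLpNorm f 1 ≤ ∑' α : Fin d → ℤ, eLpNorm f 1 (volume.restrict (cube α)) := by
    simp only [eLpNorm_one_eq_lintegral_enorm]
    rw [← setLIntegral_univ, ← iUnion_cube]
    exact lintegral_iUnion_le _ _
  exact hcover.trans (hamalgam ▸ ENNReal.tsum_le_tsum hlocal)

lemma lowerSemicontinuous_amalgamNorm {X : Type*} [TopologicalSpace X] [FirstCountableTopology X]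
    {Φ : X → (Fin d → ℝ) → ℂ} (hq : 0 ≤ q) (hω : AEStronglyMeasurable ω)
    (hΦ : ∀ x, AEStronglyMeasurable (Φ x))
    (hcont : ∀ x, TendstoInMeasure volume Φ (𝓝 x) (Φ x)) :
    LowerSemicontinuous fun x => amalgamNorm p q ω (Φ x) :=
  ENNReal.continuous_rpow_const.comp_lowerSemicontinuous
    (lowerSemicontinuous_tsum fun α => ENNReal.continuous_rpow_const.comp_lowerSemicontinuous
      (lowerSemicontinuous_eLpNorm_smul Measure.restrict_le_self.absolutelyContinuous hω hΦ hcont _)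
      (ENNReal.monotone_rpow_of_nonneg hq))
    (ENNReal.monotone_rpow_of_nonneg (by positivity))

end Amalgam

section Fourier

open scoped BoundedContinuousFunction

variable {d : ℕ} {f g : (Fin d → ℝ) → ℂ}

lemma fourierT_eq_fourierIntegral (f : (Fin d → ℝ) → ℂ) :
    fourierT f
      = VectorFourier.fourierIntegral Real.fourierChar volume (dotProductBilin ℝ ℝ) f := by
  ext ξ
  rw [Real.vector_fourierIntegral_eq_integral_exp_smul, fourierT]
  refine integral_congr_ae (Eventually.of_forall fun x => ?_)
  simp only [dotProductBilin_apply_apply, dotProduct, smul_eq_mul]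
  push_cast
  ring_nf

lemma continuous_dotProductBilin :
    Continuous fun x : (Fin d → ℝ) × (Fin d → ℝ) => dotProductBilin ℝ ℝ x.1 x.2 := by
  simp only [dotProductBilin_apply_apply]
  fun_prop

lemma fourierT_congr_ae (h : f =ᵐ[volume] g) : fourierT f = fourierT g := by
  simp only [fourierT_eq_fourierIntegral, VectorFourier.fourierIntegral_congr_ae _ _ _ h]

lemma fourierT_add (hf : Integrable f) (hg : Integrable g) :
    fourierT (f + g) = fourierT f + fourierT g := by
  simpa only [fourierT_eq_fourierIntegral] using VectorFourier.fourierIntegral_add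
    Real.continuous_fourierChar continuous_dotProductBilin hf hg

lemma fourierT_const_smul (c : ℂ) (f : (Fin d → ℝ) → ℂ) : fourierT (c • f) = c • fourierT f := by
  simpa only [fourierT_eq_fourierIntegral] using VectorFourier.fourierIntegral_const_smul ..

lemma continuous_fourierT (hf : Integrable f) : Continuous (fourierT f) := by
  simpa only [fourierT_eq_fourierIntegral] using VectorFourier.fourierIntegral_continuous
    Real.continuous_fourierChar continuous_dotProductBilin hf

lemma norm_fourierT_le (f : (Fin d → ℝ) → ℂ) (ξ : Fin d → ℝ) : ‖fourierT f ξ‖ ≤ ∫ x, ‖f x‖ := by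
  simpa only [fourierT_eq_fourierIntegral] using
    VectorFourier.norm_fourierIntegral_le_integral_norm ..

lemma norm_fourierT_coeFn_le (f : (Fin d → ℝ) →₁[volume] ℂ) (ξ : Fin d → ℝ) :
    ‖fourierT f ξ‖ ≤ ‖f‖ :=
  (norm_fourierT_le f ξ).trans_eq (L1.norm_eq_integral_norm f).symm

/-- The Fourier transform as a continuous linear map from `L¹` to bounded continuous functions. -/
noncomputable def fourierL1 : ((Fin d → ℝ) →₁[volume] ℂ) →L[ℂ] (Fin d → ℝ) →ᵇ ℂ :=
  LinearMap.mkContinuous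
    { toFun f := .ofNormedAddCommGroup (fourierT f) (continuous_fourierT (L1.integrable_coeFn f))
        ‖f‖ (norm_fourierT_coeFn_le f)
      map_add' f g := DFunLike.coe_injective <| by
        exact (fourierT_congr_ae (Lp.coeFn_add f g)).trans
          (fourierT_add (L1.integrable_coeFn f) (L1.integrable_coeFn g))
      map_smul' c f := DFunLike.coe_injective <| by
        exact (fourierT_congr_ae (Lp.coeFn_smul c f)).trans (fourierT_const_smul c f) }
    1 fun f => by
      simpa only [one_mul] using
        (BoundedContinuousFunction.norm_le (norm_nonneg f)).2 (norm_fourierT_coeFn_le f)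

lemma tendstoInMeasure_fourierT (f : (Fin d → ℝ) →₁[volume] ℂ) :
    TendstoInMeasure volume (fun g : (Fin d → ℝ) →₁[volume] ℂ => fourierT g) (𝓝 f) (fourierT f) :=
  tendstoInMeasure_of_tendstoUniformly
    (BoundedContinuousFunction.tendsto_iff_tendstoUniformly.1 (fourierL1.continuous.tendsto f))

end Fourier

section ANorm

variable {d : ℕ} {p q r : ℝ} {ϑ₁ ϑ₂ : (Fin d → ℝ) → ℝ} {f g : (Fin d → ℝ) → ℂ}

lemma ANorm_congr_ae (h : f =ᵐ[volume] g) : ANorm p q r ϑ₁ ϑ₂ f = ANorm p q r ϑ₁ ϑ₂ g := by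
  rw [ANorm, ANorm, amalgamNorm_congr_ae h, fourierT_congr_ae h]

lemma eLpNorm_one_le_ANorm (hp : 1 ≤ p) (hϑ₁ : ∀ x, 1 ≤ ϑ₁ x) (hf : AEStronglyMeasurable f) :
    eLpNorm f 1 ≤ ANorm p q r ϑ₁ ϑ₂ f :=
  (eLpNorm_one_le_amalgamNorm hp hϑ₁ hf).trans le_self_add

lemma MemA.ANorm_lt_top (hf : MemA p q r ϑ₁ ϑ₂ f) : ANorm p q r ϑ₁ ϑ₂ f < ∞ :=
  ENNReal.add_lt_top.2 ⟨hf.1.2, hf.2.2⟩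

lemma MemA.integrable (hp : 1 ≤ p) (hϑ₁ : ∀ x, 1 ≤ ϑ₁ x) (hf : MemA p q r ϑ₁ ϑ₂ f) :
    Integrable f := by
  have hmeas : AEStronglyMeasurable f := hf.1.1.aestronglyMeasurable
  exact memLp_one_iff_integrable.1
    ⟨hmeas, (eLpNorm_one_le_ANorm hp hϑ₁ hmeas).trans_lt hf.ANorm_lt_top⟩

lemma memA_coeFn (f : (Fin d → ℝ) →₁[volume] ℂ) (hf : ANorm p q r ϑ₁ ϑ₂ f < ∞) :
    MemA p q r ϑ₁ ϑ₂ f :=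
  ⟨⟨(Lp.stronglyMeasurable f).measurable, (ENNReal.add_lt_top.1 hf).1⟩,
    (continuous_fourierT (L1.integrable_coeFn f)).measurable, (ENNReal.add_lt_top.1 hf).2⟩

lemma lowerSemicontinuous_ANorm (hr : 0 ≤ r) (hϑ₁ : AEStronglyMeasurable ϑ₁)
    (hϑ₂ : AEStronglyMeasurable ϑ₂) :
    LowerSemicontinuous fun f : (Fin d → ℝ) →₁[volume] ℂ => ANorm p q r ϑ₁ ϑ₂ f :=
  (lowerSemicontinuous_amalgamNorm zero_le_one hϑ₁ (fun f => Lp.aestronglyMeasurable f)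
      fun _ => tendstoInMeasure_of_tendsto_Lp tendsto_id).add
    (lowerSemicontinuous_amalgamNorm hr hϑ₂
      (fun f => (continuous_fourierT (L1.integrable_coeFn f)).aestronglyMeasurable)
      tendstoInMeasure_fourierT)

/-- The norm of `A^{p,1,q,r}_{ϑ₁,ϑ₂}` as an extended seminorm on `L¹`. -/
noncomputable def extendedANorm (hp : 1 ≤ p) (hq : 1 ≤ q) (hr : 1 ≤ r)
    (hϑ₁ : AEStronglyMeasurable ϑ₁) (hϑ₂ : AEStronglyMeasurable ϑ₂) :
    ExtendedSeminorm ℂ ((Fin d → ℝ) →₁[volume] ℂ) where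
  toFun f := ANorm p q r ϑ₁ ϑ₂ f
  map_add_le' f g := by
    have hf := L1.integrable_coeFn f
    have hg := L1.integrable_coeFn g
    rw [ANorm_congr_ae (Lp.coeFn_add f g), ANorm, fourierT_add hf hg]
    refine (add_le_add (amalgamNorm_add_le hp le_rfl hϑ₁ hf.1 hg.1)
      (amalgamNorm_add_le hq hr hϑ₂ (continuous_fourierT hf).aestronglyMeasurable
        (continuous_fourierT hg).aestronglyMeasurable)).trans_eq (add_add_add_comm ..)
  map_smul' c f := by
    rw [ANorm_congr_ae (Lp.coeFn_smul c f), ANorm, fourierT_const_smul,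
      amalgamNorm_const_smul one_pos, amalgamNorm_const_smul (by linarith), ← mul_add, ANorm]

lemma enorm_le_extendedANorm (hp : 1 ≤ p) (hq : 1 ≤ q) (hr : 1 ≤ r)
    (hϑ₁ : AEStronglyMeasurable ϑ₁) (hϑ₂ : AEStronglyMeasurable ϑ₂) (hone : ∀ x, 1 ≤ ϑ₁ x)
    (f : (Fin d → ℝ) →₁[volume] ℂ) : ‖f‖ₑ ≤ extendedANorm hp hq hr hϑ₁ hϑ₂ f := by
  rw [Lp.enorm_def]
  exact eLpNorm_one_le_ANorm hp hone (Lp.aestronglyMeasurable f)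

end ANorm

theorem A_inclusion_continuous_general {d : ℕ} {p q r p' q' r' : ℝ}
    (hp : 1 ≤ p) (hq : 1 ≤ q) (hr : 1 ≤ r) (hp' : 1 ≤ p') (hq' : 1 ≤ q') (hr' : 1 ≤ r')
    {ϑ₁ ϑ₂ ϑ₃ ϑ₄ : (Fin d → ℝ) → ℝ} (h1 : AEStronglyMeasurable ϑ₁) (h1_one : ∀ x, 1 ≤ ϑ₁ x)
    (h2 : AEStronglyMeasurable ϑ₂) (h3 : AEStronglyMeasurable ϑ₃) (h4 : AEStronglyMeasurable ϑ₄)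
    (hsub : ∀ f : (Fin d → ℝ) → ℂ, MemA p q r ϑ₁ ϑ₂ f → MemA p' q' r' ϑ₃ ϑ₄ f) :
    ∃ c : ℝ, 0 < c ∧ ∀ f : (Fin d → ℝ) → ℂ, MemA p q r ϑ₁ ϑ₂ f →
      ANorm p' q' r' ϑ₃ ϑ₄ f ≤ ENNReal.ofReal c * ANorm p q r ϑ₁ ϑ₂ f := by
  obtain ⟨c, hc, hbound⟩ := ExtendedSeminorm.exists_le_mul_of_lt_top_imp_lt_top
    (N₁ := extendedANorm hp hq hr h1 h2) (N₂ := extendedANorm hp' hq' hr' h3 h4)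
    (lowerSemicontinuous_ANorm (by linarith) h1 h2)
    (lowerSemicontinuous_ANorm (by linarith) h3 h4)
    (enorm_le_extendedANorm hp hq hr h1 h2 h1_one)
    fun f hf => (hsub f (memA_coeFn f hf)).ANorm_lt_top
  refine ⟨c, hc, fun f hf => ?_⟩
  have hae := (hf.integrable hp h1_one).coeFn_toL1
  rw [← ANorm_congr_ae hae, ← ANorm_congr_ae hae]
  exact hbound _

/-- a set inclusion between the spaces `A^{p,1,q,r}` with different
weights is automatically a continuous embedding. -/
theorem A_inclusion_continuous {d : ℕ} (p q r : ℝ) (hp : 1 ≤ p) (hq : 1 ≤ q) (hr : 1 ≤ r)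
    (ϑ₁ ϑ₂ ϑ₃ ϑ₄ : (Fin d → ℝ) → ℝ)
    (h1 : IsBeurling ϑ₁) (h2 : IsBeurling ϑ₂) (h3 : IsBeurling ϑ₃) (h4 : IsBeurling ϑ₄)
    (hsub : ∀ f : (Fin d → ℝ) → ℂ, MemA p q r ϑ₁ ϑ₂ f → MemA p q r ϑ₃ ϑ₄ f) :
    ∃ c : ℝ, 0 < c ∧ ∀ f : (Fin d → ℝ) → ℂ, MemA p q r ϑ₁ ϑ₂ f →
      ANorm p q r ϑ₃ ϑ₄ f ≤ ENNReal.ofReal c * ANorm p q r ϑ₁ ϑ₂ f :=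
  A_inclusion_continuous_general hp hq hr hp hq hr h1.1.aestronglyMeasurable h1.2.1
    h2.1.aestronglyMeasurable h3.1.aestronglyMeasurable h4.1.aestronglyMeasurable hsub
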